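/- Translation correctness for the sliding-interval pattern 'whenever Ψ1 occurs, Ψ2 does not occur during following [a,b]': let π be a finite timed trace, Ψ1, Ψ2 state predicates on S, and 0 ≤ a ≤ b ≤ k. Assume that for every index i with t_i ≤ t_0 + (k − b) there is an index m with t_m = t_i + a. Then π ⊨ G_{≤k−b}(Ψ1 ⟹ X_{≤a} G_{≤b−a} ¬Ψ2) if and only if for every index i with t_i ≤ t_0 + (k − b) at which Ψ1(s_i) holds, no index j with t_i + a ≤ t_j ≤ t_i + b satisfies Ψ2(s_j). -/

import Mathlib

/-- A finite timed trace: states `s 0, …, s n` with strictly increasing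
time stamps `t 0 < t 1 < ⋯ < t n`. -/
structure TTrace (S : Type*) where
  n : ℕ
  s : ℕ → S
  t : ℕ → ℝ
  mono : ∀ i, i < n → t i < t (i + 1)

/-- The suffix `π^i` of a timed trace. -/
def TTrace.suffix {S : Type*} (π : TTrace S) (i : ℕ) : TTrace S where
  n := π.n - i
  s := fun j => π.s (i + j)
  t := fun j => π.t (i + j)
  mono := fun j hj => π.mono (i + j) (by omega)

/-- A trace property is a predicate on timed traces. -/
abbrev TraceProp (S : Type*) := TTrace S → Prop

/-- A state predicate regarded as a trace property: it holds on `π` iff it holds in `s 0`. -/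
def statePred {S : Type*} (Ψ : S → Prop) : TraceProp S := fun π => Ψ (π.s 0)

/-- `π ⊨ G_{≤k} Φ` iff `π^i ⊨ Φ` for every index `i` with `t i ≤ t 0 + k`. -/
def Gle {S : Type*} (k : ℝ) (Φ : TraceProp S) : TraceProp S := fun π =>
  ∀ i, i ≤ π.n → π.t i ≤ π.t 0 + k → Φ (π.suffix i)

/-- `π ⊨ F_{≤k} Φ` iff `π^i ⊨ Φ` for some index `i` with `t i ≤ t 0 + k`. -/
def Fle {S : Type*} (k : ℝ) (Φ : TraceProp S) : TraceProp S := fun π =>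
  ∃ i, i ≤ π.n ∧ π.t i ≤ π.t 0 + k ∧ Φ (π.suffix i)

/-- `π ⊨ X_{≤k} Φ` iff `π^m ⊨ Φ` for `m` the largest index with `t m ≤ t 0 + k`. -/
noncomputable def Xle {S : Type*} (k : ℝ) (Φ : TraceProp S) : TraceProp S := fun π =>
  Φ (π.suffix (@Nat.findGreatest (fun i => π.t i ≤ π.t 0 + k) (Classical.decPred _) π.n))

def pImp {S : Type*} (Φ1 Φ2 : TraceProp S) : TraceProp S := fun π => Φ1 π → Φ2 π
def pNot {S : Type*} (Φ : TraceProp S) : TraceProp S := fun π => ¬ Φ π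
def pAnd {S : Type*} (Φ1 Φ2 : TraceProp S) : TraceProp S := fun π => Φ1 π ∧ Φ2 π
def pOr {S : Type*} (Φ1 Φ2 : TraceProp S) : TraceProp S := fun π => Φ1 π ∨ Φ2 π
def pTrue {S : Type*} : TraceProp S := fun _ => True
def pFalse {S : Type*} : TraceProp S := fun _ => False

theorem TTrace.lt_of_lt {S : Type*} (π : TTrace S) (i j : ℕ) (hij : i < j) (hj : j ≤ π.n) :
    π.t i < π.t j := by
  induction j, hij using Nat.le_induction with
  | base => exact π.mono i (by omega)
  | succ j h ih => exact (ih (by omega)).trans (π.mono j (by omega))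

theorem TTrace.le_of_t_le {S : Type*} (π : TTrace S) (i j : ℕ) (hi : i ≤ π.n)
    (h : π.t i ≤ π.t j) : i ≤ j := by
  by_contra hc
  exact absurd (π.lt_of_lt j i (by omega) hi) (not_lt.mpr h)

theorem TTrace.t_le_of_le {S : Type*} (π : TTrace S) (i j : ℕ) (hij : i ≤ j) (hj : j ≤ π.n) :
    π.t i ≤ π.t j := by
  rcases hij.eq_or_lt with rfl | h
  · exact le_rfl
  · exact (π.lt_of_lt i j h hj).le

theorem TTrace.Xle_iff {S : Type*} (π : TTrace S) (a : ℝ) (Φ : TraceProp S) (m : ℕ)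
    (hmn : m ≤ π.n) (h : π.t m = π.t 0 + a) : Xle a Φ π ↔ Φ (π.suffix m) := by
  unfold Xle
  have : @Nat.findGreatest (fun i => π.t i ≤ π.t 0 + a) (Classical.decPred _) π.n = m := by
    classical
    rw [Nat.findGreatest_eq_iff]
    refine ⟨hmn, fun _ => h.le, fun j hj hjn hc => ?_⟩
    have := π.lt_of_lt m j hj hjn
    linarith
  rw [this]

/-- translation correctness for the sliding-interval pattern
'whenever Ψ1 occurs, Ψ2 does not occur during following [a,b]':
`π ⊨ G_{≤k−b}(Ψ1 ⟹ X_{≤a} G_{≤b−a} ¬Ψ2)` iff for every index `i` with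
`t i ≤ t 0 + (k − b)` at which `Ψ1 (s i)` holds, no index `j` with
`t i + a ≤ t j ≤ t i + b` satisfies `Ψ2 (s j)`. -/
theorem pattern_sliding_not_occur {S : Type*} (π : TTrace S)
    (Ψ1 Ψ2 : S → Prop) (a b k : ℝ) (ha : 0 ≤ a) (hab : a ≤ b) (hbk : b ≤ k)
    (hm : ∀ i, i ≤ π.n → π.t i ≤ π.t 0 + (k - b) →
            ∃ m, m ≤ π.n ∧ π.t m = π.t i + a) :
    Gle (k - b) (pImp (statePred Ψ1) (Xle a (Gle (b - a) (pNot (statePred Ψ2))))) π ↔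
      ∀ i, i ≤ π.n → π.t i ≤ π.t 0 + (k - b) → Ψ1 (π.s i) →
        ¬ ∃ j, j ≤ π.n ∧ π.t i + a ≤ π.t j ∧ π.t j ≤ π.t i + b ∧ Ψ2 (π.s j) := by
  refine forall_congr' fun i => forall_congr' fun hi => forall_congr' fun hti =>
    forall_congr' fun _ => ?_
  obtain ⟨m, hmn, hme⟩ := hm i hi hti
  have him : i ≤ m := π.le_of_t_le i m hi (by linarith)
  obtain ⟨d, rfl⟩ := Nat.exists_eq_add_of_le him
  rw [TTrace.Xle_iff (π.suffix i) a _ d (by simp only [TTrace.suffix]; omega)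
    (by simpa [TTrace.suffix] using hme)]
  simp only [Gle, pNot, statePred, TTrace.suffix, add_zero]
  constructor
  · rintro h ⟨j, hj, h1, h2, h3⟩
    have hle : i + d ≤ j := π.le_of_t_le _ _ hmn (by linarith)
    obtain ⟨e, rfl⟩ := Nat.exists_eq_add_of_le hle
    rw [add_assoc] at h2 h3
    exact h e (by omega) (by linarith) h3
  · intro h e he h1 h2
    have h3 := π.t_le_of_le (i + d) (i + (d + e)) (by omega) (by omega)
    exact h ⟨i + (d + e), by omega, by linarith, by linarith, h2⟩
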